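/- (Shifted Raabe formula.) Let n ≥ 1, let α = (α_1,…,α_n) be real numbers with α_i > 0 for all i, let a = (a_1,…,a_n) be real numbers with a_i ≥ 0 for all i, and let s = (s_1,…,s_n) ∈ ℂ^n with Re(s_i) > 1 for all i. Define G : ℝ_{≥0}^n → ℂ by G(b_1,…,b_n) = Σ_{m ∈ ℕ^n} ∏_{i=1}^n ( Σ_{j=1}^{i} (m_j + b_j + α_j) )^{−s_i}. Then Y_{n,a}(α; s) = ∫_{[0,1]^n} G(a_1+t_1, …, a_n+t_n) dt, where Y_{n,a}(α; s) = ∫_{[α_1,∞)×⋯×[α_n,∞)} ∏_{i=1}^n ( x_1+⋯+x_i + a_1+⋯+a_i )^{−s_i} dx and dt, dx denote Lebesgue measure. -/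

import Mathlib

/-!
The half-open unit cubes with corners `α + m`, `m ∈ ℕ^n`, tile the orthant `∏ i, [α i, ∞)`. Cutting
the integral into its contributions from these cubes and translating each of them back to `[0, 1)^n`
turns it into a sum of integrals over one cube; absolute integrability allows the sum to be moved
inside. On the orthant every term `x j + a j` is positive, so a sum of such terms is at least its
`i`-th one; hence the integrand is dominated by `∏ i, (x i + a i) ^ (-(s i).re)`, a product of
integrable functions of one variable.
-/

open MeasureTheory Set Function

section Tiling

theorem iUnion_Ico_add_natCast {R : Type*} [Ring R] [LinearOrder R] [IsStrictOrderedRing R]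
    [Archimedean R] (c : R) : ⋃ k : ℕ, Ico (c + k) (c + k + 1) = Ici c := by
  have not_bddAbove : ¬BddAbove (range fun k : ℕ ↦ c + k) := by
    rintro ⟨b, hb⟩
    obtain ⟨k, hk⟩ := exists_nat_gt (b - c)
    exact (hb ⟨k, rfl⟩).not_gt (sub_lt_iff_lt_add'.1 hk)
  simpa [add_assoc] using iUnion_Ico_map_succ_eq_Ici (f := fun k : ℕ ↦ c + k) (by simp) not_bddAbove

theorem pairwise_disjoint_univ_pi {ι : Type*} {κ π : ι → Type*} {t : ∀ i, κ i → Set (π i)}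
    (ht : ∀ i, Pairwise (Disjoint on t i)) :
    Pairwise (Disjoint on fun m : ∀ i, κ i ↦ univ.pi fun i ↦ t i (m i)) := fun _ _ hne ↦
  let ⟨i, hi⟩ := ne_iff.1 hne
  disjoint_univ_pi.2 ⟨i, ht i hi⟩

variable {ι R : Type*} [Ring R] [LinearOrder R] [IsStrictOrderedRing R]

theorem image_add_right_univ_pi_Ico_zero_one (c : ι → R) :
    (· + c) '' (univ.pi fun _ ↦ Ico 0 1) = univ.pi fun i ↦ Ico (c i) (c i + 1) :=
  (piMap_image_univ_pi (fun i x ↦ x + c i) _).trans <| by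
    simp only [image_add_const_Ico, zero_add, add_comm (1 : R)]

theorem iUnion_image_add_right_univ_pi_Ico_zero_one [Archimedean R] (c : ι → R) :
    ⋃ m : ι → ℕ, (· + fun i ↦ c i + m i) '' (univ.pi fun _ ↦ Ico 0 1) =
      univ.pi fun i ↦ Ici (c i) := by
  simp only [image_add_right_univ_pi_Ico_zero_one, ← iUnion_Ico_add_natCast]
  exact iUnion_univ_pi fun i (k : ℕ) ↦ Ico (c i + k) (c i + k + 1)

theorem pairwise_disjoint_image_add_right_univ_pi_Ico_zero_one (c : ι → R) :
    Pairwise (Disjoint on fun m : ι → ℕ ↦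
      (· + fun i ↦ c i + (m i : R)) '' (univ.pi fun _ ↦ Ico 0 1)) := by
  simp only [image_add_right_univ_pi_Ico_zero_one]
  refine pairwise_disjoint_univ_pi (t := fun i (k : ℕ) ↦ Ico (c i + k) (c i + k + 1))
    fun i k l hkl ↦ ?_
  simpa [onFun] using pairwise_disjoint_Ico_add_intCast (c i) (Nat.cast_injective.ne hkl)

end Tiling

section Unfolding

variable {E : Type*} [NormedAddCommGroup E] [NormedSpace ℝ E]

theorem setIntegral_iUnion_image_eq_setIntegral_tsum {X Y κ : Type*} [MeasurableSpace X]
    [MeasurableSpace Y] [Countable κ] {μ : Measure X} {ν : Measure Y} {e : κ → X → Y} {Q : Set X}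
    (he : ∀ k, MeasurePreserving (e k) μ ν) (he_emb : ∀ k, MeasurableEmbedding (e k))
    (hQ : MeasurableSet Q) (hdisj : Pairwise (Disjoint on fun k ↦ e k '' Q)) {f : Y → E}
    (hf : IntegrableOn f (⋃ k, e k '' Q) ν) :
    ∫ y in ⋃ k, e k '' Q, f y ∂ν = ∫ x in Q, ∑' k, f (e k x) ∂μ := by
  have image_meas (k : κ) : MeasurableSet (e k '' Q) := (he_emb k).measurableSet_image.2 hQ
  have comp_integrable (k : κ) : IntegrableOn (fun x ↦ f (e k x)) Q μ :=
    ((he k).integrableOn_image (he_emb k)).1 (hf.mono_set (subset_iUnion (fun k ↦ e k '' Q) k))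
  have summable_norm : Summable fun k ↦ ∫ x in Q, ‖f (e k x)‖ ∂μ := by
    simpa only [(he _).setIntegral_image_emb (he_emb _) (fun y ↦ ‖f y‖)] using
      (hasSum_integral_iUnion image_meas hdisj hf.norm).summable
  calc ∫ y in ⋃ k, e k '' Q, f y ∂ν
      = ∑' k, ∫ y in e k '' Q, f y ∂ν := integral_iUnion image_meas hdisj hf
    _ = ∑' k, ∫ x in Q, f (e k x) ∂μ :=
        tsum_congr fun k ↦ (he k).setIntegral_image_emb (he_emb k) f Q
    _ = ∫ x in Q, ∑' k, f (e k x) ∂μ :=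
        integral_tsum_of_summable_integral_norm comp_integrable summable_norm

theorem setIntegral_univ_pi_Ici_eq_setIntegral_tsum {ι : Type*} [Fintype ι] {c : ι → ℝ}
    {f : (ι → ℝ) → E} (hf : IntegrableOn f (univ.pi fun i ↦ Ici (c i))) :
    ∫ x in univ.pi fun i ↦ Ici (c i), f x =
      ∫ t in univ.pi fun _ ↦ Icc 0 1, ∑' m : ι → ℕ, f fun i ↦ t i + (c i + m i) := by
  rw [← iUnion_image_add_right_univ_pi_Ico_zero_one] at hf ⊢
  rw [setIntegral_iUnion_image_eq_setIntegral_tsum (μ := volume)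
    (fun _ ↦ measurePreserving_add_right _ _) (fun _ ↦ measurableEmbedding_addRight _)
    (.univ_pi fun _ ↦ measurableSet_Ico)
    (pairwise_disjoint_image_add_right_univ_pi_Ico_zero_one c) hf]
  exact setIntegral_congr_set Measure.pi_Ico_ae_eq_pi_Icc

end Unfolding

section Integrability

theorem norm_sum_cpow_le_rpow_of_mem {ι : Type*} {S : Finset ι} {i : ι} (hi : i ∈ S) {y : ι → ℝ}
    (hy : ∀ j ∈ S, 0 ≤ y j) (hyi : 0 < y i) {z : ℂ} (hz : z.re ≤ 0) :
    ‖((∑ j ∈ S, y j : ℝ) : ℂ) ^ z‖ ≤ y i ^ z.re := by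
  have term_le_sum : y i ≤ ∑ j ∈ S, y j := Finset.single_le_sum hy hi
  rw [Complex.norm_cpow_eq_rpow_re_of_pos (hyi.trans_le term_le_sum)]
  exact Real.rpow_le_rpow_of_nonpos hyi term_le_sum hz

variable {ι : Type*} [Fintype ι]

theorem integrableOn_univ_pi_prod {𝕜 : Type*} [NormedCommRing 𝕜] {X : ι → Type*}
    [∀ i, MeasurableSpace (X i)] {μ : ∀ i, Measure (X i)} [∀ i, SigmaFinite (μ i)]
    {f : ∀ i, X i → 𝕜} {s : ∀ i, Set (X i)} (hf : ∀ i, IntegrableOn (f i) (s i) (μ i)) :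
    IntegrableOn (fun x ↦ ∏ i, f i (x i)) (univ.pi s) (Measure.pi μ) := by
  rw [IntegrableOn, Measure.restrict_pi_pi]
  exact Integrable.fintype_prod_dep hf

theorem integrableOn_univ_pi_Ici_prod_sum_cpow {S : ι → Finset ι} (hS : ∀ i, i ∈ S i)
    {α a : ι → ℝ} (hαa : ∀ i, 0 < α i + a i) {s : ι → ℂ} (hs : ∀ i, 1 < (s i).re) :
    IntegrableOn (fun x : ι → ℝ ↦ ∏ i, ((∑ j ∈ S i, (x j + a j) : ℝ) : ℂ) ^ (-s i))
      (univ.pi fun i ↦ Ici (α i)) := by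
  have dominating : IntegrableOn (fun x : ι → ℝ ↦ ∏ i, (x i + a i) ^ (-s i).re)
      (univ.pi fun i ↦ Ici (α i)) :=
    integrableOn_univ_pi_prod fun i ↦ (integrableOn_Ici_iff_integrableOn_Ioi (by simp)).2 <|
      integrableOn_add_rpow_Ioi_of_lt (by simpa using hs i) (by linarith [hαa i])
  refine dominating.mono' (Measurable.aestronglyMeasurable (by fun_prop)) <|
    ae_restrict_of_forall_mem (.univ_pi fun _ ↦ measurableSet_Ici) fun x hx ↦ ?_
  have x_add_pos (j : ι) : 0 < x j + a j :=
    (hαa j).trans_le (add_le_add_left (hx j trivial) _)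
  rw [norm_prod]
  exact Finset.prod_le_prod (fun _ _ ↦ norm_nonneg _) fun i _ ↦
    norm_sum_cpow_le_rpow_of_mem (hS i) (fun j _ ↦ (x_add_pos j).le) (x_add_pos i)
      (by simpa using (zero_lt_one.trans (hs i)).le)

end Integrability

theorem shifted_raabe_formula_general {ι : Type*} [Fintype ι] {S : ι → Finset ι}
    (hS : ∀ i, i ∈ S i) {α a : ι → ℝ} (hαa : ∀ i, 0 < α i + a i) {s : ι → ℂ}
    (hs : ∀ i, 1 < (s i).re) :
    let G : (ι → ℝ) → ℂ := fun b ↦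
      ∑' m : ι → ℕ, ∏ i, ((∑ j ∈ S i, ((m j : ℝ) + b j + α j) : ℝ) : ℂ) ^ (-s i)
    (∫ x in univ.pi fun i ↦ Ici (α i),
        ∏ i, (((∑ j ∈ S i, x j) + ∑ j ∈ S i, a j : ℝ) : ℂ) ^ (-s i))
      = ∫ t in univ.pi fun _ ↦ Icc (0 : ℝ) 1, G fun i ↦ a i + t i := by
  intro G
  have summand_eq (t c m a : ℝ) : t + (c + m) + a = m + (a + t) + c := by ring
  simp only [G, ← Finset.sum_add_distrib]
  rw [setIntegral_univ_pi_Ici_eq_setIntegral_tsum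
    (integrableOn_univ_pi_Ici_prod_sum_cpow hS hαa hs)]
  simp only [summand_eq]

/-- Shifted Raabe formula: with `G(b) = Σ_{m ∈ ℕ^n} ∏_i (Σ_{j≤i} (m_j+b_j+α_j))^{-s_i}`,
one has `Y_{n,a}(α; s) = ∫_{[0,1]^n} G(a+t) dt`, where
`Y_{n,a}(α; s) = ∫_{[α_1,∞)×⋯×[α_n,∞)} ∏_i (x_1+⋯+x_i+a_1+⋯+a_i)^{-s_i} dx`. -/
theorem shifted_raabe_formula
    (n : ℕ) (hn : 1 ≤ n) (α a : Fin n → ℝ) (hα : ∀ i, 0 < α i) (ha : ∀ i, 0 ≤ a i)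
    (s : Fin n → ℂ) (hs : ∀ i, 1 < (s i).re) :
    let G : (Fin n → ℝ) → ℂ := fun b =>
      ∑' m : Fin n → ℕ,
        ∏ i : Fin n,
          (((∑ j ∈ Finset.Iic i, ((m j : ℝ) + b j + α j)) : ℝ) : ℂ) ^ (-(s i))
    (∫ x in Set.univ.pi fun i : Fin n => Set.Ici (α i),
        ∏ i : Fin n,
          (((∑ j ∈ Finset.Iic i, x j) + ∑ j ∈ Finset.Iic i, a j : ℝ) : ℂ) ^ (-(s i)))
      = ∫ t in Set.univ.pi fun _ : Fin n => Set.Icc (0 : ℝ) 1,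
          G (fun i => a i + t i) := by
  exact shifted_raabe_formula_general (fun _ ↦ Finset.mem_Iic.2 le_rfl)
    (fun i ↦ add_pos_of_pos_of_nonneg (hα i) (ha i)) hs
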